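/- Let S = [[α, β],[γ, δ]] ∈ U(2L)_inv and set φ(S) = [[γ − δβ⁻¹α, δβ⁻¹],[−β⁻¹α, β⁻¹]]. Then for any vectors φ, φ', ψ, ψ', ξ, ξ' ∈ ℂ^L, one has S·(ψ, ψ')ᵀ = (φ, φ')ᵀ + (ξ, ξ')ᵀ if and only if φ(S)·(ψ, φ)ᵀ = (φ', ψ')ᵀ + [[−δβ⁻¹, 1],[−β⁻¹, 0]]·(ξ, ξ')ᵀ. -/

import Mathlib

open Matrix

/-!
The first block row of `S (ψ, ψ')ᵀ = (y, y')ᵀ` can be solved for `ψ' = β⁻¹ (y - α ψ)`, and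
substituting this into the second row gives `φ(S) (ψ, y)ᵀ = (y', ψ')ᵀ`. An inhomogeneity only
shifts the outputs to `y = φ + ξ` and `y' = φ' + ξ'`; by linearity, moving the `ξ`-part of both
shifts to the right-hand side produces the matrix `[[-δβ⁻¹, 1],[-β⁻¹, 0]]`.
-/

namespace ScatteringTransfer

lemma mulVec_eq_iff_eq_invOf_mulVec {R n : Type*} [Semiring R] [Fintype n] [DecidableEq n]
    {A : Matrix n n R} [Invertible A] {v w : n → R} : A *ᵥ v = w ↔ v = ⅟A *ᵥ w := by
  constructor
  · rintro rfl
    rw [mulVec_mulVec, invOf_mul_self, one_mulVec]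
  · rintro rfl
    rw [mulVec_mulVec, mul_invOf_self, one_mulVec]

variable {R l m n : Type*} [Ring R] [Fintype l] [Fintype n] [DecidableEq n]
  (α : Matrix n l R) (β : Matrix n n R) (γ : Matrix m l R) (δ : Matrix m n R) [Invertible β]

/-- The matrix `φ(S)` attached to `S = [[α, β],[γ, δ]]`. It exchanges the input of `S` entering
through `β` with the first output of `S`. Writing `⅟β` instead of `β⁻¹` allows noncommutative
scalars, for which Mathlib's matrix inverse is not available. -/
def transferMatrix : Matrix (m ⊕ n) (l ⊕ n) R :=
  fromBlocks (γ - δ * ⅟β * α) (δ * ⅟β) (-(⅟β * α)) ⅟β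

/-- The matrix carrying an inhomogeneity `(ξ, ξ')` of the equation for `S = [[α, β],[γ, δ]]` to the
inhomogeneity of the equation for `φ(S)`. -/
def sourceMatrix [DecidableEq m] : Matrix (m ⊕ n) (n ⊕ m) R :=
  fromBlocks (-(δ * ⅟β)) 1 (-⅟β) 0

lemma transferMatrix_mulVec_elim (q : l → R) (y : n → R) :
    transferMatrix α β γ δ *ᵥ Sum.elim q y =
      Sum.elim (γ *ᵥ q + δ *ᵥ (⅟β *ᵥ (y - α *ᵥ q))) (⅟β *ᵥ (y - α *ᵥ q)) := by
  simp only [transferMatrix, fromBlocks_mulVec, Sum.elim_comp_inl, Sum.elim_comp_inr, sub_mulVec,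
    neg_mulVec, mulVec_sub, ← mulVec_mulVec]
  congr 1 <;> abel

theorem fromBlocks_mulVec_elim_eq_iff_transferMatrix (q : l → R) (q' y : n → R) (y' : m → R) :
    fromBlocks α β γ δ *ᵥ Sum.elim q q' = Sum.elim y y' ↔
      transferMatrix α β γ δ *ᵥ Sum.elim q y = Sum.elim y' q' := by
  have solve_first_row : α *ᵥ q + β *ᵥ q' = y ↔ ⅟β *ᵥ (y - α *ᵥ q) = q' := by
    rw [← eq_sub_iff_add_eq', mulVec_eq_iff_eq_invOf_mulVec, eq_comm]
  rw [fromBlocks_mulVec, transferMatrix_mulVec_elim, Sum.elim_eq_iff, Sum.elim_eq_iff,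
    Sum.elim_comp_inl, Sum.elim_comp_inr, solve_first_row, and_comm]
  exact and_congr_left fun hq' => by rw [hq']

theorem transferMatrix_mulVec_elim_add_add_sourceMatrix_mulVec [Fintype m] [DecidableEq m]
    (q : l → R) (p x : n → R) (x' : m → R) :
    transferMatrix α β γ δ *ᵥ Sum.elim q (p + x) + sourceMatrix β δ *ᵥ Sum.elim x x' =
      transferMatrix α β γ δ *ᵥ Sum.elim q p + Sum.elim x' 0 := by
  simp only [transferMatrix, sourceMatrix, fromBlocks_mulVec, Sum.elim_comp_inl, Sum.elim_comp_inr,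
    mulVec_add, neg_mulVec, one_mulVec, zero_mulVec, ← Sum.elim_add_add]
  congr 1 <;> abel

end ScatteringTransfer

open ScatteringTransfer

theorem stmt_4_general {R l m n : Type*} [Ring R] [Fintype l] [Fintype m] [Fintype n]
    [DecidableEq m] [DecidableEq n]
    (α : Matrix n l R) (β : Matrix n n R) (γ : Matrix m l R) (δ : Matrix m n R) [Invertible β]
    (p : n → R) (p' : m → R) (q : l → R) (q' x : n → R) (x' : m → R) :
    fromBlocks α β γ δ *ᵥ Sum.elim q q' = Sum.elim p p' + Sum.elim x x' ↔
      transferMatrix α β γ δ *ᵥ Sum.elim q p =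
        Sum.elim p' q' + sourceMatrix β δ *ᵥ Sum.elim x x' := by
  have shift_output : Sum.elim (p' + x') q' = Sum.elim p' q' + Sum.elim x' 0 := by
    rw [← Sum.elim_add_add, add_zero]
  rw [← Sum.elim_add_add, fromBlocks_mulVec_elim_eq_iff_transferMatrix, shift_output,
    ← add_left_inj (sourceMatrix β δ *ᵥ Sum.elim x x'),
    transferMatrix_mulVec_elim_add_add_sourceMatrix_mulVec, add_right_comm, add_left_inj]

/-- For `S = [[α, β],[γ, δ]]` unitary with `β` invertible and
`φ(S) = [[γ − δβ⁻¹α, δβ⁻¹],[−β⁻¹α, β⁻¹]]`, one has, for any inhomogeneity `(ξ, ξ')`,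
`S (ψ, ψ')ᵀ = (φ, φ')ᵀ + (ξ, ξ')ᵀ ↔
 φ(S) (ψ, φ)ᵀ = (φ', ψ')ᵀ + [[−δβ⁻¹, 1],[−β⁻¹, 0]] (ξ, ξ')ᵀ`. -/
theorem stmt_4 (L : ℕ) (hL : 1 ≤ L)
    (α β γ δ : Matrix (Fin L) (Fin L) ℂ)
    (hS : fromBlocks α β γ δ ∈ Matrix.unitaryGroup (Fin L ⊕ Fin L) ℂ)
    (hβ : IsUnit β)
    (p p' q q' x x' : Fin L → ℂ) :
    (fromBlocks α β γ δ).mulVec (Sum.elim q q') = Sum.elim p p' + Sum.elim x x' ↔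
      (fromBlocks (γ - δ * β⁻¹ * α) (δ * β⁻¹) (-(β⁻¹ * α)) β⁻¹).mulVec (Sum.elim q p) =
        Sum.elim p' q' +
          (fromBlocks (-(δ * β⁻¹)) 1 (-β⁻¹) 0).mulVec (Sum.elim x x') := by
  obtain ⟨_⟩ := hβ.nonempty_invertible
  simpa only [transferMatrix, sourceMatrix, invOf_eq_nonsing_inv] using
    stmt_4_general α β γ δ p p' q q' x x'
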